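/- arXiv:2507.03606 — 4 statements merged into one kernel-verified Lean document; each statement's English description precedes it below -/
import Mathlib

section
/- Let F : (0,∞) → ℝ be a nondecreasing function that has a point of discontinuity on the right, i.e., there exists t₀ > 0 such that F(t₀⁺) := inf_{t > t₀} F(t) > F(t₀). Then there exist a complete metric space (X,d), a map T : X → X, and a constant τ > 0 such that T is an F-contraction with constant τ, but T is not a Meir-Keeler contraction. -/
/-!
A map with only two values `p` and `q`, at distance `r`, is tested only by pairs of points with
different values. If all such pairs are at distance `> r`, then an upward jump of `F` at `r` makes
the map an `F`-contraction; if some of them are at distance arbitrarily close to `r`, the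
Meir-Keeler condition fails at `ε = r`. Both happen for the horizontal axis and the graph of
`s ↦ r + exp (-s)`, which approach distance `r` at infinity without attaining it; their union is
closed in the plane, hence complete, and the axis has room for `p` and `q`.
-/

open Set

section Contractions

variable {X : Type*} [PseudoMetricSpace X]

/-- `T` is an `F`-contraction with constant `τ`. The positivity of `τ` is not part of the
definition, and `F : (0, ∞) → ℝ` is represented by a function on `ℝ`, evaluated at positive
arguments only. -/
def IsFContraction (F : ℝ → ℝ) (τ : ℝ) (T : X → X) : Prop :=
  ∀ x y, 0 < dist (T x) (T y) → τ + F (dist (T x) (T y)) ≤ F (dist x y)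

/-- `T` is a Meir-Keeler contraction of `X`: the property that the counterexample must violate. -/
def IsMeirKeeler (T : X → X) : Prop :=
  ∀ ε : ℝ, 0 < ε → ∃ δ : ℝ, 0 < δ ∧
    ∀ x y, ε ≤ dist x y → dist x y < ε + δ → dist (T x) (T y) < ε

variable {A : Set X} [∀ x, Decidable (x ∈ A)] {p q : X}

theorem isFContraction_piecewise_const {F : ℝ → ℝ} {τ : ℝ}
    (hF : ∀ x ∈ A, ∀ y ∉ A, τ + F (dist p q) ≤ F (dist x y)) :
    IsFContraction F τ (A.piecewise (fun _ ↦ p) fun _ ↦ q) := by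
  intro x y hT
  by_cases hx : x ∈ A <;> by_cases hy : y ∈ A <;>
    simp only [piecewise, hx, hy, if_true, if_false, dist_self, lt_irrefl] at hT ⊢
  · exact hF x hx y hy
  · rw [dist_comm q p, dist_comm x y]
    exact hF y hy x hx

theorem not_isMeirKeeler_piecewise_const (hpq : 0 < dist p q)
    (hA : ∀ δ > 0, ∃ x ∈ A, ∃ y ∉ A, dist p q ≤ dist x y ∧ dist x y < dist p q + δ) :
    ¬ IsMeirKeeler (A.piecewise (fun _ ↦ p) fun _ ↦ q) := by
  intro hMK
  obtain ⟨δ, hδ, hlt⟩ := hMK (dist p q) hpq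
  obtain ⟨x, hx, y, hy, hle, hclose⟩ := hA δ hδ
  simpa [hx, hy] using hlt x y hle hclose

end Contractions

section AxisUnionGraph

variable {Y : Type*}

/-- The union of the axis `Y × {0}` and the graph of `g` in `Y × ℝ`: the space carrying the
counterexample. -/
def axisUnionGraph (g : Y → ℝ) : Set (Y × ℝ) :=
  {z | z.2 = 0 ∨ z.2 = g z.1}

theorem isClosed_axisUnionGraph [TopologicalSpace Y] {g : Y → ℝ} (hg : Continuous g) :
    IsClosed (axisUnionGraph g) :=
  (isClosed_eq continuous_snd continuous_const).union
    (isClosed_eq continuous_snd (hg.comp continuous_fst))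

theorem lt_dist_of_mem_axisUnionGraph [PseudoMetricSpace Y] {g : Y → ℝ} {r : ℝ}
    (hg : ∀ s, r < g s) {z w : Y × ℝ} (hz : z.2 = 0) (hw : w ∈ axisUnionGraph g)
    (hw₀ : w.2 ≠ 0) : r < dist z w :=
  calc
    r < g w.1 := hg w.1
    _ = w.2 := (hw.resolve_left hw₀).symm
    _ ≤ |w.2| := le_abs_self _
    _ = dist z.2 w.2 := by rw [hz, dist_zero_left, Real.norm_eq_abs]
    _ ≤ dist z w := le_max_right _ _

end AxisUnionGraph

theorem exists_completeSpace_dist_gap_not_attained {r : ℝ} (hr : 0 ≤ r) :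
    ∃ (X : Type) (_ : MetricSpace X), CompleteSpace X ∧ ∃ (A : Set X) (p q : X),
      dist p q = r ∧ (∀ x ∈ A, ∀ y ∉ A, r < dist x y) ∧
        ∀ δ > 0, ∃ x ∈ A, ∃ y ∉ A, dist x y < r + δ := by
  let g : ℝ → ℝ := fun s ↦ r + Real.exp (-s)
  have hg : ∀ s, r < g s := fun s ↦ lt_add_of_pos_right r (Real.exp_pos _)
  have hg₀ : ∀ s, 0 < g s := fun s ↦ hr.trans_lt (hg s)
  have hcomplete : CompleteSpace (axisUnionGraph g) :=
    (isClosed_axisUnionGraph (by fun_prop)).completeSpace_coe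
  let axisPoint (s : ℝ) : axisUnionGraph g := ⟨(s, 0), Or.inl rfl⟩
  let graphPoint (s : ℝ) : axisUnionGraph g := ⟨(s, g s), Or.inr rfl⟩
  refine ⟨axisUnionGraph g, inferInstance, hcomplete, {z | z.1.2 = 0}, axisPoint 0, axisPoint r,
    ?_, fun x hx y hy ↦ lt_dist_of_mem_axisUnionGraph hg hx y.2 hy, fun δ hδ ↦ ?_⟩
  · rw [Subtype.dist_eq, dist_prod_same_right, dist_zero_left, Real.norm_of_nonneg hr]
  · obtain ⟨s, hs⟩ : ∃ s, Real.exp (-s) < δ :=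
      (Real.tendsto_exp_neg_atTop_nhds_zero.eventually_lt_const hδ).exists
    refine ⟨axisPoint s, rfl, graphPoint s, (hg₀ s).ne', ?_⟩
    calc
      dist (axisPoint s) (graphPoint s) = g s := by
        rw [Subtype.dist_eq, dist_prod_same_left, dist_zero_left, Real.norm_of_nonneg (hg₀ s).le]
      _ < r + δ := add_lt_add_right hs r

theorem stmt_0_general (F : ℝ → ℝ) (t₀ : ℝ) (ht₀ : 0 < t₀) (hbdd : BddBelow (F '' Ioi t₀))
    (hdisc : F t₀ < sInf (F '' Ioi t₀)) :
    ∃ (X : Type) (_ : MetricSpace X), CompleteSpace X ∧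
      ∃ (T : X → X) (τ : ℝ), 0 < τ ∧ IsFContraction F τ T ∧ ¬ IsMeirKeeler T := by
  classical
  obtain ⟨X, _, hX, A, p, q, rfl, hgap, hclose⟩ := exists_completeSpace_dist_gap_not_attained ht₀.le
  refine ⟨X, inferInstance, hX, A.piecewise (fun _ ↦ p) fun _ ↦ q,
    sInf (F '' Ioi (dist p q)) - F (dist p q), sub_pos.2 hdisc,
    isFContraction_piecewise_const fun x hx y hy ↦ ?_,
    not_isMeirKeeler_piecewise_const ht₀ fun δ hδ ↦ ?_⟩
  · rw [sub_add_cancel]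
    exact csInf_le hbdd (mem_image_of_mem F (hgap x hx y hy))
  · obtain ⟨x, hx, y, hy, hxy⟩ := hclose δ hδ
    exact ⟨x, hx, y, hy, (hgap x hx y hy).le, hxy⟩

/-- If `F : (0,∞) → ℝ` is nondecreasing and has a point of right
discontinuity (`F(t₀⁺) := inf_{t > t₀} F t > F t₀` for some `t₀ > 0`), then there
exist a complete metric space `X`, a map `T : X → X` and `τ > 0` such that `T` is an
`F`-contraction with constant `τ` but `T` is not a Meir-Keeler contraction. -/
theorem stmt_0 (F : ℝ → ℝ) (hF : ∀ s t : ℝ, 0 < s → s ≤ t → F s ≤ F t)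
    (t₀ : ℝ) (ht₀ : 0 < t₀) (hdisc : F t₀ < sInf (F '' Set.Ioi t₀)) :
    ∃ (X : Type) (_ : MetricSpace X), CompleteSpace X ∧
      ∃ (T : X → X) (τ : ℝ), 0 < τ ∧
        (∀ x y : X, 0 < dist (T x) (T y) →
          τ + F (dist (T x) (T y)) ≤ F (dist x y)) ∧
        ¬ (∀ ε : ℝ, 0 < ε → ∃ δ : ℝ, 0 < δ ∧ ∀ x y : X,
            ε ≤ dist x y → dist x y < ε + δ → dist (T x) (T y) < ε) :=
  stmt_0_general F t₀ ht₀ ⟨F t₀, forall_mem_image.2 fun t ht ↦ hF t₀ t ht₀ (le_of_lt ht)⟩ hdisc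
end

section
/- Let t₀ > 0, let k = ⌊2t₀⌋ + 1, and let (γ_m)_{m≥1} satisfy 0 < γ_m < k − 2t₀ for all m ≥ 1 and γ_m → 0 as m → ∞. Define X = A ∪ B ⊆ ℝ with the usual metric, where A = {0} ∪ {t₀} ∪ {k·n : n ≥ 1} and B = {k·m + t₀ + γ_m : m ≥ 1}, and define T : X → X by Tx = 0 for x ∈ A and Tx = t₀ for x ∈ B. Then T is not a Meir-Keeler contraction; in fact, for ε = t₀ and every δ > 0 there exist x, y ∈ X with t₀ ≤ d(x,y) < t₀ + δ and d(Tx,Ty) ≥ t₀ (take x = k·n and y = k·n + t₀ + γ_n for n sufficiently large). -/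
/-!
If `T` sends `A` to `p` and `B` to `q`, the images of any point of `A` and any point of `B` lie at
distance exactly `dist p q`. So the Meir-Keeler condition fails at `ε = dist p q > 0` as soon as
`A × B` contains pairs whose distances tend to `dist p q` from above. Here `(p, q) = (0, t₀)`, and
such pairs are the translates of `(0, t₀)` by `k * n` with the second entry perturbed by `γ n`.
-/

open Filter Topology

/-- Meir-Keeler contractions: the self-maps that, at every scale `ε`, bring any two points whose
distance is at least `ε` but close enough to `ε` to a distance less than `ε`. -/
def IsMeirKeelerContraction {X : Type*} [PseudoMetricSpace X] (T : X → X) : Prop :=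
  ∀ ε : ℝ, 0 < ε → ∃ δ : ℝ, 0 < δ ∧ ∀ x y : X,
    ε ≤ dist x y → dist x y < ε + δ → dist (T x) (T y) < ε

theorem not_isMeirKeelerContraction_of_forall_exists {X : Type*} [PseudoMetricSpace X]
    {T : X → X} {ε : ℝ} (hε : 0 < ε)
    (h : ∀ δ : ℝ, 0 < δ → ∃ x y : X,
      ε ≤ dist x y ∧ dist x y < ε + δ ∧ ε ≤ dist (T x) (T y)) :
    ¬ IsMeirKeelerContraction T := by
  intro hT
  obtain ⟨δ, hδ, hlt⟩ := hT ε hε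
  obtain ⟨x, y, hle, hltδ, himage⟩ := h δ hδ
  exact (hlt x y hle hltδ).not_ge himage

theorem exists_dist_lt_add_of_tendsto_dist {E ι : Type*} [PseudoMetricSpace E]
    {A B : Set E} {p q : E} {T : ↥(A ∪ B) → ↥(A ∪ B)}
    (hTA : ∀ x : ↥(A ∪ B), (x : E) ∈ A → (T x : E) = p)
    (hTB : ∀ x : ↥(A ∪ B), (x : E) ∈ B → (T x : E) = q)
    {l : Filter ι} [l.NeBot] {a b : ι → E} (ha : ∀ᶠ i in l, a i ∈ A) (hb : ∀ᶠ i in l, b i ∈ B)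
    (hle : ∀ᶠ i in l, dist p q ≤ dist (a i) (b i))
    (hlim : Tendsto (fun i => dist (a i) (b i)) l (𝓝 (dist p q))) {δ : ℝ} (hδ : 0 < δ) :
    ∃ x y : ↥(A ∪ B),
      dist p q ≤ dist x y ∧ dist x y < dist p q + δ ∧ dist p q ≤ dist (T x) (T y) := by
  have hlt : ∀ᶠ i in l, dist (a i) (b i) < dist p q + δ :=
    hlim.eventually_lt_const (lt_add_of_pos_right _ hδ)
  obtain ⟨i, hai, hbi, hlei, hlti⟩ := (ha.and (hb.and (hle.and hlt))).exists
  let x : ↥(A ∪ B) := ⟨a i, Or.inl hai⟩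
  let y : ↥(A ∪ B) := ⟨b i, Or.inr hbi⟩
  have himage : dist (T x) (T y) = dist p q := by
    rw [Subtype.dist_eq, hTA x hai, hTB y hbi]
  exact ⟨x, y, hlei, hlti, himage.ge⟩

theorem stmt_4_general {t₀ : ℝ} (ht₀ : 0 < t₀) {a γ : ℕ → ℝ}
    (hγ : ∀ᶠ n in atTop, 0 ≤ γ n) (hγ0 : Tendsto γ atTop (𝓝 0)) {A B : Set ℝ}
    (ha : ∀ᶠ n in atTop, a n ∈ A) (hb : ∀ᶠ n in atTop, a n + t₀ + γ n ∈ B)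
    {T : ↥(A ∪ B) → ↥(A ∪ B)}
    (hTA : ∀ x : ↥(A ∪ B), (x : ℝ) ∈ A → (T x : ℝ) = 0)
    (hTB : ∀ x : ↥(A ∪ B), (x : ℝ) ∈ B → (T x : ℝ) = t₀) :
    (∀ δ : ℝ, 0 < δ → ∃ x y : ↥(A ∪ B),
        t₀ ≤ dist x y ∧ dist x y < t₀ + δ ∧ t₀ ≤ dist (T x) (T y)) ∧
    ¬ IsMeirKeelerContraction T := by
  have hdist_images : dist 0 t₀ = t₀ := by rw [dist_zero_left, Real.norm_of_nonneg ht₀.le]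
  have hdist : ∀ᶠ n in atTop, dist (a n) (a n + t₀ + γ n) = t₀ + γ n := by
    filter_upwards [hγ] with n hn
    rw [add_assoc, dist_self_add_right, Real.norm_of_nonneg (add_nonneg ht₀.le hn)]
  have hle : ∀ᶠ n in atTop, dist 0 t₀ ≤ dist (a n) (a n + t₀ + γ n) := by
    filter_upwards [hγ, hdist] with n hn hdistn
    rw [hdist_images, hdistn]
    exact le_add_of_nonneg_right hn
  have hlim : Tendsto (fun n => dist (a n) (a n + t₀ + γ n)) atTop (𝓝 (dist 0 t₀)) := by
    rw [hdist_images, tendsto_congr' hdist]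
    simpa only [add_zero] using hγ0.const_add t₀
  have hpairs : ∀ δ : ℝ, 0 < δ → ∃ x y : ↥(A ∪ B),
      t₀ ≤ dist x y ∧ dist x y < t₀ + δ ∧ t₀ ≤ dist (T x) (T y) := by
    intro δ hδ
    simpa only [hdist_images] using
      exists_dist_lt_add_of_tendsto_dist hTA hTB ha hb hle hlim hδ
  exact ⟨hpairs, not_isMeirKeelerContraction_of_forall_exists ht₀ hpairs⟩

/-- With `t₀ > 0`, `k = ⌊2t₀⌋ + 1`, `0 < γ m < k − 2t₀` and `γ m → 0`,
`X = A ∪ B ⊆ ℝ` with the usual metric where `A = {0} ∪ {t₀} ∪ {k·n : n ≥ 1}` and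
`B = {k·m + t₀ + γ m : m ≥ 1}`, and `T : X → X` sending `A` to `0` and `B` to `t₀`,
the map `T` is not a Meir-Keeler contraction: for `ε = t₀` and every `δ > 0` there
are `x, y ∈ X` with `t₀ ≤ d(x,y) < t₀ + δ` and `d(Tx,Ty) ≥ t₀`. -/
theorem stmt_4 (t₀ : ℝ) (ht₀ : 0 < t₀) (k : ℝ) (hk : k = (⌊2 * t₀⌋ : ℝ) + 1)
    (γ : ℕ → ℝ) (hγ : ∀ m : ℕ, 1 ≤ m → 0 < γ m ∧ γ m < k - 2 * t₀)
    (hγ0 : Filter.Tendsto γ Filter.atTop (nhds 0))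
    (A B : Set ℝ)
    (hA : A = {0, t₀} ∪ {x : ℝ | ∃ n : ℕ, 1 ≤ n ∧ x = k * n})
    (hB : B = {x : ℝ | ∃ m : ℕ, 1 ≤ m ∧ x = k * m + t₀ + γ m})
    (T : ↥(A ∪ B) → ↥(A ∪ B))
    (hTA : ∀ x : ↥(A ∪ B), (x : ℝ) ∈ A → (T x : ℝ) = 0)
    (hTB : ∀ x : ↥(A ∪ B), (x : ℝ) ∈ B → (T x : ℝ) = t₀) :
    (∀ δ : ℝ, 0 < δ → ∃ x y : ↥(A ∪ B),
        t₀ ≤ dist x y ∧ dist x y < t₀ + δ ∧ t₀ ≤ dist (T x) (T y)) ∧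
    ¬ (∀ ε : ℝ, 0 < ε → ∃ δ : ℝ, 0 < δ ∧ ∀ x y : ↥(A ∪ B),
        ε ≤ dist x y → dist x y < ε + δ → dist (T x) (T y) < ε) := by
  have hpos : ∀ᶠ m : ℕ in atTop, 1 ≤ m := eventually_ge_atTop 1
  have hmemA : ∀ᶠ n : ℕ in atTop, k * n ∈ A := hpos.mono fun n hn => hA ▸ Or.inr ⟨n, hn, rfl⟩
  have hmemB : ∀ᶠ m : ℕ in atTop, k * m + t₀ + γ m ∈ B := hpos.mono fun m hm => hB ▸ ⟨m, hm, rfl⟩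
  exact stmt_4_general ht₀ (hpos.mono fun m hm => (hγ m hm).1.le) hγ0 hmemA hmemB hTA hTB
end

section
/- Define F : (0,∞) → ℝ by F(t) = 5/2 for 0 < t < 1/2 and F(t) = (1 + t²)/t for t ≥ 1/2, and let E = λ·F where 0 < λ < 4/5. Then the pair (E,F) satisfies condition (C₁) (i.e., t ≤ s implies E(t) < F(s) for t, s > 0), and neither E nor F is monotone on (0,∞). -/
/-!
The factorisation `y + y⁻¹ - (x + x⁻¹) = (y - x) (x y - 1) / (x y)` compares values of `x + x⁻¹`.
For `a ≤ x ≤ y` it gives `x + x⁻¹ ≤ a + a⁻¹` if `x ≤ a⁻¹`, and `x + x⁻¹ ≤ y + y⁻¹` otherwise;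
together with AM-GM, `2 (x + x⁻¹) ≤ (a + a⁻¹) (y + y⁻¹)` in both cases. Now `F t = x + x⁻¹` with
`x = max (1/2) t`, so `a = 1/2` yields `4/5 * F t ≤ F s` whenever `t ≤ s`, which is where the bound
on `λ` comes from. Monotonicity fails because `F` takes the same value at `a` and `a⁻¹` and a
smaller one at `1` in between.
-/

open Set

section ConstMul

variable {α R : Type*} [Preorder α] [Mul R] [Zero R] [Preorder R] [PosMulMono R] [PosMulReflectLE R]
  {f : α → R} {S : Set α} {c : R}

theorem monotoneOn_const_mul_iff (hc : 0 < c) :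
    MonotoneOn (fun t => c * f t) S ↔ MonotoneOn f S := by
  simp only [MonotoneOn, mul_le_mul_iff_right₀ hc]

theorem antitoneOn_const_mul_iff (hc : 0 < c) :
    AntitoneOn (fun t => c * f t) S ↔ AntitoneOn f S := by
  simp only [AntitoneOn, mul_le_mul_iff_right₀ hc]

end ConstMul

section AddInv

variable {K : Type*} [Field K] [LinearOrder K] [IsStrictOrderedRing K] {a x y : K}

theorem two_lt_add_inv (hx : 0 < x) (hx1 : x ≠ 1) : 2 < x + x⁻¹ := by
  have hsq : x + x⁻¹ - 2 = (x - 1) ^ 2 / x := by field_simp; ring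
  have : 0 < (x - 1) ^ 2 / x := div_pos (sq_pos_of_ne_zero (sub_ne_zero.2 hx1)) hx
  linarith

theorem two_le_add_inv (hx : 0 < x) : 2 ≤ x + x⁻¹ := by
  rcases eq_or_ne x 1 with rfl | hx1
  · rw [inv_one, one_add_one_eq_two]
  · exact (two_lt_add_inv hx hx1).le

theorem add_inv_le_add_inv_of_one_le_mul (hx : 0 < x) (hxy : x ≤ y) (h : 1 ≤ x * y) :
    x + x⁻¹ ≤ y + y⁻¹ := by
  have hy : 0 < y := hx.trans_le hxy
  have hdiff : y + y⁻¹ - (x + x⁻¹) = (y - x) * (x * y - 1) / (x * y) := by field_simp; ring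
  have : 0 ≤ (y - x) * (x * y - 1) / (x * y) :=
    div_nonneg (mul_nonneg (sub_nonneg.2 hxy) (sub_nonneg.2 h)) (mul_pos hx hy).le
  linarith

theorem two_mul_add_inv_le (ha : 0 < a) (hax : a ≤ x) (hxy : x ≤ y) :
    2 * (x + x⁻¹) ≤ (a + a⁻¹) * (y + y⁻¹) := by
  have hx : 0 < x := ha.trans_le hax
  have hy : 0 < y := hx.trans_le hxy
  rcases le_total x a⁻¹ with hxa | hxa
  · have hle : x + x⁻¹ ≤ a + a⁻¹ := by
      have h : 1 ≤ x * a⁻¹ := by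
        rwa [← div_eq_mul_inv, one_le_div₀ ha]
      simpa [add_comm] using add_inv_le_add_inv_of_one_le_mul hx hxa h
    rw [mul_comm]
    exact mul_le_mul hle (two_le_add_inv hy) zero_le_two (by positivity)
  · have hle : x + x⁻¹ ≤ y + y⁻¹ := by
      refine add_inv_le_add_inv_of_one_le_mul hx hxy ?_
      calc 1 = a⁻¹ * a := (inv_mul_cancel₀ ha.ne').symm
        _ ≤ x * y := mul_le_mul hxa (hax.trans hxy) ha.le hx.le
    exact mul_le_mul (two_le_add_inv ha) hle (by positivity) (by positivity)

end AddInv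

section ClampedAddInv

variable {K : Type*} [Field K] [LinearOrder K] {a l s t : K}

/-- The function `x ↦ x + x⁻¹` on `[a, ∞)`, extended to the left of `a` by the constant `a + a⁻¹`.
The function `F` of the main theorem agrees on `(0, ∞)` with `clampedAddInv (1 / 2)`. -/
def clampedAddInv (a t : K) : K := max a t + (max a t)⁻¹

namespace clampedAddInv

theorem of_le (h : t ≤ a) : clampedAddInv a t = a + a⁻¹ := by
  rw [clampedAddInv, max_eq_left h]

theorem of_ge (h : a ≤ t) : clampedAddInv a t = t + t⁻¹ := by
  rw [clampedAddInv, max_eq_right h]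

variable [IsStrictOrderedRing K]

theorem const_mul_lt (ha : 0 < a) (hl : l * (a + a⁻¹) < 2) (hts : t ≤ s) :
    l * clampedAddInv a t < clampedAddInv a s := by
  have hmax : 0 < max a t := lt_max_of_lt_left ha
  have hpos : 0 < clampedAddInv a t := add_pos hmax (inv_pos.2 hmax)
  have hconst : 0 < a + a⁻¹ := add_pos ha (inv_pos.2 ha)
  refine lt_of_mul_lt_mul_left ?_ hconst.le
  calc (a + a⁻¹) * (l * clampedAddInv a t)
      = l * (a + a⁻¹) * clampedAddInv a t := by ring
    _ < 2 * clampedAddInv a t := mul_lt_mul_of_pos_right hl hpos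
    _ ≤ (a + a⁻¹) * clampedAddInv a s :=
      two_mul_add_inv_le ha (le_max_left a t) (max_le_max_left a hts)

theorem apply_one_lt_apply_self (ha : 0 < a) (ha1 : a < 1) :
    clampedAddInv a 1 < clampedAddInv a a := by
  rw [of_ge ha1.le, of_le le_rfl, inv_one, one_add_one_eq_two]
  exact two_lt_add_inv ha ha1.ne

theorem apply_inv_self (ha : 0 < a) (ha1 : a ≤ 1) : clampedAddInv a a⁻¹ = clampedAddInv a a := by
  rw [of_ge (ha1.trans ((one_le_inv₀ ha).2 ha1)), of_le le_rfl, inv_inv, add_comm]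

theorem not_monotoneOn (ha : 0 < a) (ha1 : a < 1) : ¬MonotoneOn (clampedAddInv a) (Ioi 0) :=
  fun h => (apply_one_lt_apply_self ha ha1).not_ge (h ha one_pos ha1.le)

theorem not_antitoneOn (ha : 0 < a) (ha1 : a < 1) : ¬AntitoneOn (clampedAddInv a) (Ioi 0) := by
  intro h
  have hle : clampedAddInv a a⁻¹ ≤ clampedAddInv a 1 :=
    h one_pos (inv_pos.2 ha) ((one_le_inv₀ ha).2 ha1.le)
  rw [apply_inv_self ha ha1.le] at hle
  exact (apply_one_lt_apply_self ha ha1).not_ge hle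

end clampedAddInv

end ClampedAddInv

/-- For `F(t) = 5/2` on `(0,1/2)` and `F(t) = (1+t²)/t` for `t ≥ 1/2`,
and `E = λ·F` with `0 < λ < 4/5`, the pair `(E,F)` satisfies condition `(C₁)`
(`t ≤ s → E t < F s` for `t, s > 0`), and neither `E` nor `F` is monotone on `(0,∞)`. -/
theorem stmt_10 (l : ℝ) (hl : 0 < l) (hl' : l < 4 / 5) (F E : ℝ → ℝ)
    (hF₁ : ∀ t : ℝ, 0 < t → t < 1 / 2 → F t = 5 / 2)
    (hF₂ : ∀ t : ℝ, 1 / 2 ≤ t → F t = (1 + t ^ 2) / t)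
    (hE : ∀ t : ℝ, E t = l * F t) :
    (∀ t s : ℝ, 0 < t → t ≤ s → E t < F s) ∧
    ¬ MonotoneOn F (Set.Ioi (0 : ℝ)) ∧ ¬ AntitoneOn F (Set.Ioi (0 : ℝ)) ∧
    ¬ MonotoneOn E (Set.Ioi (0 : ℝ)) ∧ ¬ AntitoneOn E (Set.Ioi (0 : ℝ)) := by
  obtain rfl : E = fun t => l * F t := funext hE
  have hF : EqOn F (clampedAddInv (1 / 2)) (Ioi 0) := by
    intro t (ht : 0 < t)
    rcases lt_or_ge t (1 / 2) with h | h
    · rw [hF₁ t ht h, clampedAddInv.of_le h.le]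
      norm_num
    · rw [hF₂ t h, clampedAddInv.of_ge h]
      field_simp
      ring
  have hmono : ¬MonotoneOn F (Ioi 0) := by
    rw [hF.congr_monotoneOn]
    exact clampedAddInv.not_monotoneOn one_half_pos one_half_lt_one
  have hanti : ¬AntitoneOn F (Ioi 0) := by
    rw [hF.congr_antitoneOn]
    exact clampedAddInv.not_antitoneOn one_half_pos one_half_lt_one
  refine ⟨fun t s ht hts => ?_, hmono, hanti, (monotoneOn_const_mul_iff hl).not.2 hmono,
    (antitoneOn_const_mul_iff hl).not.2 hanti⟩
  change l * F t < F s
  rw [hF ht, hF (ht.trans_le hts)]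
  exact clampedAddInv.const_mul_lt one_half_pos (by linarith) hts
end

section
/- Let E, F : (0,∞) → ℝ satisfy condition (C₁) (for all t, s > 0, t ≤ s implies E(t) < F(s)). Suppose F is continuous on the right and for every t > 0 and every sequence (t_n) with t_n ≥ t for all n and t_n → t, one has liminf_n E(t_n) < F(t). If T is an (E,F)-contraction on a complete metric space (X,d), then T is a Meir-Keeler contraction. -/
/-!
Just to the right of `a`, condition `(C₁)` gives `E t < F t`, and `F t → F a`, so no cluster value
of `E` exceeds `F a`. The `liminf` hypothesis says that `F a` is not a cluster value either, whence
`E t ≤ c < F a` for some `c` and all `t ≥ a` close to `a`. Since `F` exceeds `c` on `[a, t]`, and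
exceeds `E t` on `[t, ∞)` by `(C₁)`, we get `E t < F s` for every `s ≥ a`. For `t = dist x y` this
is incompatible with `F s ≤ E t` at `s = dist (T x) (T y)` unless `s < a`.
-/

section RightNeighborhood

open Filter Set Topology

theorem exists_lt_eventually_le_of_not_mapClusterPt {ι β : Type*} [LinearOrder β]
    [TopologicalSpace β] [OrderTopology β] [NoMinOrder β] [NoMaxOrder β]
    {l : Filter ι} {f g : ι → β} {b : β} (hb : ¬MapClusterPt b l f) (hg : Tendsto g l (𝓝 b))
    (hfg : ∀ᶠ i in l, f i ≤ g i) : ∃ c < b, ∀ᶠ i in l, f i ≤ c := by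
  simp only [mapClusterPt_iff_frequently, not_forall, not_frequently] at hb
  obtain ⟨S, hS, hfS⟩ := hb
  obtain ⟨c, d, ⟨hcb, hbd⟩, hcdS⟩ := mem_nhds_iff_exists_Ioo_subset.1 hS
  refine ⟨c, hcb, ?_⟩
  filter_upwards [hfS, hfg, hg.eventually_lt_const hbd] with i hfi hfgi hgd
  exact not_lt.1 fun hcf => hfi (hcdS ⟨hcf, hfgi.trans_lt hgd⟩)

variable {α β : Type*} [TopologicalSpace α] [TopologicalSpace β] {f g : α → β} {a : α}

theorem not_mapClusterPt_nhdsGE_of_liminf_lt [Preorder α] [FirstCountableTopology α]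
    [ConditionallyCompleteLinearOrder β] [OrderTopology β] [FirstCountableTopology β] {b : β}
    (h : ∀ u : ℕ → α, (∀ n, a ≤ u n) → Tendsto u atTop (𝓝 a) →
      liminf (fun n => f (u n)) atTop < b) :
    ¬MapClusterPt b (𝓝[≥] a) f := by
  intro hb
  obtain ⟨u, hfu, hu⟩ := hb.exists_seq_tendsto
  obtain ⟨hua, hau⟩ := tendsto_nhdsWithin_iff.1 hu
  obtain ⟨N, hN⟩ := eventually_atTop.1 hau
  have hlt : liminf (fun n => f (u (n + N))) atTop < b :=
    h (fun n => u (n + N)) (fun n => hN _ (Nat.le_add_left N n))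
      ((tendsto_add_atTop_iff_nat N).2 hua)
  exact hlt.ne ((tendsto_add_atTop_iff_nat N).2 hfu).liminf_eq

theorem eventually_nhdsGE_forall_ge_lt [LinearOrder α] [OrderTopology α] [LinearOrder β]
    [OrderTopology β] [NoMinOrder β] [NoMaxOrder β]
    (hfg : ∀ t s, a ≤ t → t ≤ s → f t < g s) (hg : ContinuousWithinAt g (Ici a) a)
    (hf : ¬MapClusterPt (g a) (𝓝[≥] a) f) :
    ∀ᶠ t in 𝓝[≥] a, ∀ s, a ≤ s → f t < g s := by
  have hfg_diag : ∀ᶠ t in 𝓝[≥] a, f t ≤ g t := by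
    filter_upwards [self_mem_nhdsWithin] with t hat using (hfg t t hat le_rfl).le
  obtain ⟨c, hc, hfc⟩ := exists_lt_eventually_le_of_not_mapClusterPt hf hg hfg_diag
  obtain ⟨d, -, hd_nhds, hcg⟩ :=
    exists_Icc_mem_subset_of_mem_nhdsGE (hg.eventually_const_lt hc)
  filter_upwards [hfc, hd_nhds] with t hft ⟨hat, htd⟩ s has
  obtain hst | hts := le_total s t
  · exact hft.trans_lt (hcg ⟨has, hst.trans htd⟩)
  · exact hfg t s hat hts

end RightNeighborhood

open Filter in
theorem stmt_13_general (E F : ℝ → ℝ)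
    (hC₁ : ∀ t s : ℝ, 0 < t → 0 < s → t ≤ s → E t < F s)
    (hFr : ∀ t : ℝ, 0 < t → Tendsto F (nhdsWithin t (Set.Ioi t)) (nhds (F t)))
    (hlim : ∀ t : ℝ, 0 < t → ∀ u : ℕ → ℝ, (∀ n, t ≤ u n) →
      Tendsto u atTop (nhds t) → liminf (fun n => E (u n)) atTop < F t)
    {X Y : Type*} [PseudoMetricSpace X] [PseudoMetricSpace Y] (T : X → Y)
    (hT : ∀ x y : X, 0 < dist (T x) (T y) → F (dist (T x) (T y)) ≤ E (dist x y)) :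
    ∀ ε : ℝ, 0 < ε → ∃ δ : ℝ, 0 < δ ∧ ∀ x y : X,
      ε ≤ dist x y → dist x y < ε + δ → dist (T x) (T y) < ε := by
  intro ε hε
  have hEF : ∀ t s, ε ≤ t → t ≤ s → E t < F s := fun t s hεt hts =>
    hC₁ t s (hε.trans_le hεt) (hε.trans_le (hεt.trans hts)) hts
  have hlt := eventually_nhdsGE_forall_ge_lt hEF (continuousWithinAt_Ioi_iff_Ici.1 (hFr ε hε))
    (not_mapClusterPt_nhdsGE_of_liminf_lt (hlim ε hε))
  obtain ⟨r, hεr, hr⟩ := mem_nhdsGE_iff_exists_Ico_subset.1 hlt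
  refine ⟨r - ε, sub_pos.2 hεr, fun x y hεxy hxy => ?_⟩
  rw [add_sub_cancel] at hxy
  by_contra! hεT
  exact (hr ⟨hεxy, hxy⟩ _ hεT).not_ge (hT x y (hε.trans_le hεT))

open Filter in
/-- Let `(E,F)` satisfy condition `(C₁)`, `F` continuous on the right,
and suppose for every `t > 0` and every sequence `tₙ → t` with `tₙ ≥ t` one has
`liminf E(tₙ) < F t`. Then every `(E,F)`-contraction on a complete metric space is a
Meir-Keeler contraction. -/
theorem stmt_13 (E F : ℝ → ℝ)
    (hC₁ : ∀ t s : ℝ, 0 < t → 0 < s → t ≤ s → E t < F s)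
    (hFr : ∀ t : ℝ, 0 < t → Tendsto F (nhdsWithin t (Set.Ioi t)) (nhds (F t)))
    (hlim : ∀ t : ℝ, 0 < t → ∀ u : ℕ → ℝ, (∀ n, t ≤ u n) →
      Tendsto u atTop (nhds t) → liminf (fun n => E (u n)) atTop < F t)
    {X : Type*} [MetricSpace X] [CompleteSpace X] (T : X → X)
    (hT : ∀ x y : X, T x ≠ T y → F (dist (T x) (T y)) ≤ E (dist x y)) :
    ∀ ε : ℝ, 0 < ε → ∃ δ : ℝ, 0 < δ ∧ ∀ x y : X,
      ε ≤ dist x y → dist x y < ε + δ → dist (T x) (T y) < ε :=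
  stmt_13_general E F hC₁ hFr hlim T fun x y hxy => hT x y (dist_pos.1 hxy)
end
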